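/- arXiv:1407.0612 — 2 statements merged into one kernel-verified Lean document; each statement's English description precedes it below -/
import Mathlib

section
/- There exists a constant C > 0 such that for every k ≥ 1 and all functions m₁, m₂ : Fin k → ℕ with M₁ = Σⱼ m₁ⱼ ≥ 1 and M₂ = Σⱼ m₂ⱼ ≥ 1, setting mγⱼ = m₁ⱼ + m₂ⱼ, Mγ = M₁ + M₂, p₁(j) = m₁ⱼ/M₁, p₂(j) = m₂ⱼ/M₂, pγ(j) = mγⱼ/Mγ, and Δℓ = (log Mγ! − log M₁! − log M₂!) − Σⱼ (log mγⱼ! − log m₁ⱼ! − log m₂ⱼ!), one has |Δℓ − (M₁·D(p₁‖pγ) + M₂·D(p₂‖pγ))| ≤ C·(k+1)·(log Mγ + 1). -/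
open Finset

/-- Kullback-Leibler divergence between two probability vectors on `Fin k`,
with the convention `0 · log (0 / x) = 0` (automatic since `0 * log _ = 0`). -/
noncomputable def klDiv {k : ℕ} (p q : Fin k → ℝ) : ℝ :=
  ∑ j, p j * Real.log (p j / q j)

/-!
Put `r n = log n! - (n log n - n)`. By Stirling, in the crude form `0 ≤ r n ≤ log n + 1`
(`stirlingRem_nonneg`, `stirlingRem_le`), replacing every `log n!` by `n log n - n` costs only
logarithmic terms. After this replacement the linear terms cancel, because the counts add up, and
the entropy terms `n log n` reassemble exactly into `M₁ D(p₁‖pγ) + M₂ D(p₂‖pγ)`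
(`sum_mul_klDiv`). The error is therefore
`(r Mγ - r M₁ - r M₂) - ∑ⱼ (r mγⱼ - r m₁ⱼ - r m₂ⱼ)`, whose `k + 1` brackets are each at most
`2 (log Mγ + 1)` in absolute value, so `C = 2` works.
-/

/-- The remainder in the leading-order Stirling approximation `log n! ≈ n log n - n`;
it vanishes at `n = 0` since `Real.log 0 = 0`. -/
noncomputable def stirlingRem (n : ℕ) : ℝ :=
  Real.log (Nat.factorial n) - (n * Real.log n - n)

lemma stirlingRem_zero : stirlingRem 0 = 0 := by
  simp [stirlingRem]

lemma stirlingRem_one : stirlingRem 1 = 1 := by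
  simp [stirlingRem]

lemma stirlingRem_succ_sub (n : ℕ) :
    stirlingRem (n + 1) - stirlingRem n
      = 1 - n * (Real.log ((n : ℝ) + 1) - Real.log n) := by
  have h : Real.log (Nat.factorial (n + 1))
      = Real.log ((n : ℝ) + 1) + Real.log (Nat.factorial n) := by
    rw [Nat.factorial_succ]
    push_cast
    exact Real.log_mul (by positivity) (by positivity)
  unfold stirlingRem
  rw [h]
  push_cast
  ring

/-- The remainder is nondecreasing, as `n log (1 + 1/n) ≤ 1`. -/
lemma stirlingRem_nonneg (n : ℕ) : 0 ≤ stirlingRem n := by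
  induction n with
  | zero => rw [stirlingRem_zero]
  | succ n ih =>
    have h := stirlingRem_succ_sub n
    rcases Nat.eq_zero_or_pos n with rfl | hn
    · simp [stirlingRem_one]
    have hn' : (0 : ℝ) < n := by exact_mod_cast hn
    have hlog := Real.log_le_sub_one_of_pos (x := ((n : ℝ) + 1) / n) (by positivity)
    rw [Real.log_div (by positivity) hn'.ne'] at hlog
    have hmul := mul_le_mul_of_nonneg_left hlog hn'.le
    have he : (n : ℝ) * (((n : ℝ) + 1) / n - 1) = 1 := by
      field_simp
      ring
    linarith

/-- The difference `log n - r n` is nondecreasing for `n ≥ 1`, as `(n + 1) log (1 + 1/n) ≥ 1`. -/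
lemma stirlingRem_le_of_pos (n : ℕ) (hn : 1 ≤ n) : stirlingRem n ≤ Real.log n + 1 := by
  induction n, hn using Nat.le_induction with
  | base => simp [stirlingRem_one]
  | succ n hn ih =>
    have h := stirlingRem_succ_sub n
    have hn' : (0 : ℝ) < n := by exact_mod_cast hn
    have hlog := Real.log_le_sub_one_of_pos (x := (n : ℝ) / ((n : ℝ) + 1)) (by positivity)
    rw [Real.log_div hn'.ne' (by positivity)] at hlog
    have hmul := mul_le_mul_of_nonneg_left hlog (by positivity : (0 : ℝ) ≤ (n : ℝ) + 1)
    have he : ((n : ℝ) + 1) * ((n : ℝ) / ((n : ℝ) + 1) - 1) = -1 := by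
      field_simp
      ring
    push_cast
    linarith

lemma stirlingRem_le {n N : ℕ} (h : n ≤ N) : stirlingRem n ≤ Real.log N + 1 := by
  rcases Nat.eq_zero_or_pos n with rfl | hn
  · rw [stirlingRem_zero]
    have := Real.log_natCast_nonneg N
    linarith
  · have hlog : Real.log n ≤ Real.log N :=
      Real.log_le_log (by exact_mod_cast hn) (by exact_mod_cast h)
    linarith [stirlingRem_le_of_pos n hn]

/-- A scaled divergence between empirical distributions, in terms of counts. Cells with `a j = 0`
contribute zero on both sides. -/
lemma sum_mul_klDiv {k : ℕ} (a c : Fin k → ℕ) (A N : ℕ) (hA : 1 ≤ A) (hN : 1 ≤ N)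
    (hsum : ∑ j, a j = A) (hac : ∀ j, a j ≤ c j) :
    (A : ℝ) * klDiv (fun j => (a j : ℝ) / (A : ℝ)) (fun j => (c j : ℝ) / (N : ℝ))
      = ∑ j, ((a j : ℝ) * Real.log (a j) - (a j : ℝ) * Real.log (c j))
        + (A : ℝ) * (Real.log N - Real.log A) := by
  have hA' : (A : ℝ) ≠ 0 := by exact_mod_cast (by omega : A ≠ 0)
  have hN' : (N : ℝ) ≠ 0 := by exact_mod_cast (by omega : N ≠ 0)
  have hs : (A : ℝ) = ∑ j, (a j : ℝ) := by
    rw [← hsum]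
    push_cast
    rfl
  have hR : (A : ℝ) * (Real.log N - Real.log A)
      = ∑ j, (a j : ℝ) * (Real.log N - Real.log A) := by
    rw [← Finset.sum_mul, ← hs]
  rw [hR, ← Finset.sum_add_distrib, klDiv, Finset.mul_sum]
  refine Finset.sum_congr rfl fun j _ => ?_
  rcases Nat.eq_zero_or_pos (a j) with h0 | hpos
  · simp [h0]
  have ha : (a j : ℝ) ≠ 0 := by exact_mod_cast hpos.ne'
  have hc : (c j : ℝ) ≠ 0 := by
    have := hac j
    exact_mod_cast (by omega : c j ≠ 0)
  rw [Real.log_div (div_ne_zero ha hA') (div_ne_zero hc hN'), Real.log_div ha hA',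
    Real.log_div hc hN']
  field_simp
  ring

theorem likelihood_variation_klDiv_approx :
    ∃ C : ℝ, 0 < C ∧ ∀ (k : ℕ), 1 ≤ k → ∀ m₁ m₂ : Fin k → ℕ,
      1 ≤ ∑ j, m₁ j → 1 ≤ ∑ j, m₂ j →
      |((Real.log (Nat.factorial (∑ j, (m₁ j + m₂ j)))
            - Real.log (Nat.factorial (∑ j, m₁ j))
            - Real.log (Nat.factorial (∑ j, m₂ j)))
          - ∑ j, (Real.log (Nat.factorial (m₁ j + m₂ j))
              - Real.log (Nat.factorial (m₁ j))
              - Real.log (Nat.factorial (m₂ j))))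
        - (((∑ j, m₁ j : ℕ) : ℝ) *
              klDiv (fun j => (m₁ j : ℝ) / ((∑ i, m₁ i : ℕ) : ℝ))
                (fun j => ((m₁ j + m₂ j : ℕ) : ℝ) / ((∑ i, (m₁ i + m₂ i) : ℕ) : ℝ))
            + ((∑ j, m₂ j : ℕ) : ℝ) *
              klDiv (fun j => (m₂ j : ℝ) / ((∑ i, m₂ i : ℕ) : ℝ))
                (fun j => ((m₁ j + m₂ j : ℕ) : ℝ) / ((∑ i, (m₁ i + m₂ i) : ℕ) : ℝ)))|
      ≤ C * ((k : ℝ) + 1) * (Real.log ((∑ j, (m₁ j + m₂ j) : ℕ) : ℝ) + 1) := by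
  refine ⟨2, by norm_num, ?_⟩
  intro k _ m₁ m₂ h₁ h₂
  have hM : ∑ j, (m₁ j + m₂ j) = ∑ j, m₁ j + ∑ j, m₂ j := Finset.sum_add_distrib
  have hle : ∀ j, m₁ j + m₂ j ≤ ∑ j, (m₁ j + m₂ j) := fun j =>
    Finset.single_le_sum (f := fun j => m₁ j + m₂ j) (fun _ _ => Nat.zero_le _)
      (Finset.mem_univ j)
  have hMpos : 1 ≤ ∑ j, (m₁ j + m₂ j) := by omega
  rw [sum_mul_klDiv m₁ (fun j => m₁ j + m₂ j) _ _ h₁ hMpos rfl (fun j => Nat.le_add_right _ _),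
    sum_mul_klDiv m₂ (fun j => m₁ j + m₂ j) _ _ h₂ hMpos rfl (fun j => Nat.le_add_left _ _)]
  have hMr : ((∑ j, (m₁ j + m₂ j) : ℕ) : ℝ) = (∑ j, m₁ j : ℕ) + (∑ j, m₂ j : ℕ) := by
    exact_mod_cast hM
  have hcell : ∑ j, (Real.log (Nat.factorial (m₁ j + m₂ j))
        - Real.log (Nat.factorial (m₁ j)) - Real.log (Nat.factorial (m₂ j)))
      = ∑ j, (stirlingRem (m₁ j + m₂ j) - stirlingRem (m₁ j) - stirlingRem (m₂ j))
        - ∑ j, ((m₁ j : ℝ) * Real.log (m₁ j) - (m₁ j : ℝ) * Real.log ((m₁ j + m₂ j : ℕ) : ℝ))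
        - ∑ j, ((m₂ j : ℝ) * Real.log (m₂ j) - (m₂ j : ℝ) * Real.log ((m₁ j + m₂ j : ℕ) : ℝ)) := by
    rw [← Finset.sum_sub_distrib, ← Finset.sum_sub_distrib]
    refine Finset.sum_congr rfl fun j _ => ?_
    unfold stirlingRem
    push_cast
    ring
  rw [hcell]
  have hbound : |∑ j, (stirlingRem (m₁ j + m₂ j) - stirlingRem (m₁ j) - stirlingRem (m₂ j))|
      ≤ k * (2 * (Real.log ((∑ j, (m₁ j + m₂ j) : ℕ) : ℝ) + 1)) := by
    refine (Finset.abs_sum_le_sum_abs _ _).trans ?_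
    refine (Finset.sum_le_card_nsmul _ _
      (2 * (Real.log ((∑ j, (m₁ j + m₂ j) : ℕ) : ℝ) + 1)) fun j _ => ?_).trans (by simp)
    have hj := hle j
    have b₁ := stirlingRem_le ((Nat.le_add_right (m₁ j) (m₂ j)).trans hj)
    have b₂ := stirlingRem_le ((Nat.le_add_left (m₂ j) (m₁ j)).trans hj)
    have b₃ := stirlingRem_le hj
    have c₁ := stirlingRem_nonneg (m₁ j)
    have c₂ := stirlingRem_nonneg (m₂ j)
    have c₃ := stirlingRem_nonneg (m₁ j + m₂ j)
    rw [abs_le]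
    constructor <;> linarith
  have b₁ := stirlingRem_le (hM ▸ Nat.le_add_right _ _ : ∑ j, m₁ j ≤ ∑ j, (m₁ j + m₂ j))
  have b₂ := stirlingRem_le (hM ▸ Nat.le_add_left _ _ : ∑ j, m₂ j ≤ ∑ j, (m₁ j + m₂ j))
  have b₃ := stirlingRem_le (le_refl (∑ j, (m₁ j + m₂ j)))
  have c₁ := stirlingRem_nonneg (∑ j, m₁ j)
  have c₂ := stirlingRem_nonneg (∑ j, m₂ j)
  have c₃ := stirlingRem_nonneg (∑ j, (m₁ j + m₂ j))
  -- The total and cell-wise entropy terms cancel, leaving only Stirling remainders.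
  have key : ∀ S T₁ T₂ : ℝ,
      (Real.log (Nat.factorial (∑ j, (m₁ j + m₂ j))) - Real.log (Nat.factorial (∑ j, m₁ j))
          - Real.log (Nat.factorial (∑ j, m₂ j)) - (S - T₁ - T₂))
        - (T₁ + ((∑ j, m₁ j : ℕ) : ℝ) * (Real.log ((∑ j, (m₁ j + m₂ j) : ℕ) : ℝ)
              - Real.log ((∑ j, m₁ j : ℕ) : ℝ))
          + (T₂ + ((∑ j, m₂ j : ℕ) : ℝ) * (Real.log ((∑ j, (m₁ j + m₂ j) : ℕ) : ℝ)
              - Real.log ((∑ j, m₂ j : ℕ) : ℝ))))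
      = stirlingRem (∑ j, (m₁ j + m₂ j)) - stirlingRem (∑ j, m₁ j)
          - stirlingRem (∑ j, m₂ j) - S := by
    intro S T₁ T₂
    unfold stirlingRem
    linear_combination (Real.log ((∑ j, (m₁ j + m₂ j) : ℕ) : ℝ) - 1) * hMr
  rw [key]
  rw [abs_le] at hbound ⊢
  constructor <;> linarith [hbound.1, hbound.2]
end

section
/- Let k ≥ 1 and m₁, m₂ : Fin k → ℕ with M₁ = Σⱼ m₁ⱼ, M₂ = Σⱼ m₂ⱼ, mγⱼ = m₁ⱼ + m₂ⱼ and Mγ = M₁ + M₂. Then the likelihood variation Δℓ = (log Mγ! − log M₁! − log M₂!) − Σⱼ (log mγⱼ! − log m₁ⱼ! − log m₂ⱼ!) satisfies Δℓ = log(C(Mγ, M₁)) − Σⱼ log(C(mγⱼ, m₁ⱼ)), and Δℓ ≥ 0. -/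
/-!
The identity is `log C(a + b, a) = log (a + b)! - log a! - log b!`, applied to the totals and to
each cell. Nonnegativity amounts to `∏ j, C(m₁ j + m₂ j, m₁ j) ≤ C(M₁ + M₂, M₁)`: choosing
`m₁ j` points in every cell `j` is one way of choosing `M₁` points overall. Formally, the left side
for two cells is one term of the Vandermonde sum for the right side, and induction handles the rest.
-/

open Finset

theorem log_choose_add (a b : ℕ) :
    Real.log (Nat.choose (a + b) a)
      = Real.log (Nat.factorial (a + b)) - Real.log (Nat.factorial a)
        - Real.log (Nat.factorial b) := by
  have ha : (Nat.factorial a : ℝ) ≠ 0 := by exact_mod_cast Nat.factorial_ne_zero a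
  have hb : (Nat.factorial b : ℝ) ≠ 0 := by exact_mod_cast Nat.factorial_ne_zero b
  have hab : (Nat.factorial (a + b) : ℝ) ≠ 0 := by
    exact_mod_cast Nat.factorial_ne_zero (a + b)
  rw [Nat.cast_add_choose, Real.log_div hab (mul_ne_zero ha hb), Real.log_mul ha hb]
  ring

/-- A single term of Vandermonde's identity is at most the whole sum. -/
theorem choose_mul_choose_le (m n a b : ℕ) :
    Nat.choose m a * Nat.choose n b ≤ Nat.choose (m + n) (a + b) := by
  rw [Nat.add_choose_eq]
  exact Finset.single_le_sum (f := fun ij : ℕ × ℕ => Nat.choose m ij.1 * Nat.choose n ij.2)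
    (a := (a, b)) (fun _ _ => Nat.zero_le _) (by simp)

theorem prod_choose_le_choose_sum {ι : Type*} (s : Finset ι) (n a : ι → ℕ) :
    ∏ j ∈ s, Nat.choose (n j) (a j) ≤ Nat.choose (∑ j ∈ s, n j) (∑ j ∈ s, a j) := by
  classical
  induction s using Finset.induction_on with
  | empty => simp
  | insert i s hi ih =>
    rw [Finset.prod_insert hi, Finset.sum_insert hi, Finset.sum_insert hi]
    exact (Nat.mul_le_mul_left _ ih).trans (choose_mul_choose_le _ _ _ _)

theorem likelihood_variation_eq_log_choose_and_nonneg {k : ℕ} (hk : 1 ≤ k)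
    (m₁ m₂ : Fin k → ℕ) :
    ((Real.log (Nat.factorial (∑ j, (m₁ j + m₂ j)))
        - Real.log (Nat.factorial (∑ j, m₁ j))
        - Real.log (Nat.factorial (∑ j, m₂ j)))
      - ∑ j, (Real.log (Nat.factorial (m₁ j + m₂ j))
          - Real.log (Nat.factorial (m₁ j))
          - Real.log (Nat.factorial (m₂ j)))
      = Real.log (Nat.choose (∑ j, (m₁ j + m₂ j)) (∑ j, m₁ j))
        - ∑ j, Real.log (Nat.choose (m₁ j + m₂ j) (m₁ j))) ∧
    0 ≤ (Real.log (Nat.factorial (∑ j, (m₁ j + m₂ j)))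
        - Real.log (Nat.factorial (∑ j, m₁ j))
        - Real.log (Nat.factorial (∑ j, m₂ j)))
      - ∑ j, (Real.log (Nat.factorial (m₁ j + m₂ j))
          - Real.log (Nat.factorial (m₁ j))
          - Real.log (Nat.factorial (m₂ j))) := by
  have key : (Real.log (Nat.factorial (∑ j, (m₁ j + m₂ j)))
        - Real.log (Nat.factorial (∑ j, m₁ j))
        - Real.log (Nat.factorial (∑ j, m₂ j)))
      - ∑ j, (Real.log (Nat.factorial (m₁ j + m₂ j))
          - Real.log (Nat.factorial (m₁ j))
          - Real.log (Nat.factorial (m₂ j)))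
      = Real.log (Nat.choose (∑ j, (m₁ j + m₂ j)) (∑ j, m₁ j))
        - ∑ j, Real.log (Nat.choose (m₁ j + m₂ j) (m₁ j)) := by
    simp only [log_choose_add, Finset.sum_add_distrib]
  refine ⟨key, ?_⟩
  have hpos : ∀ j, 0 < Nat.choose (m₁ j + m₂ j) (m₁ j) := fun j =>
    Nat.choose_pos (Nat.le_add_right _ _)
  rw [key, sub_nonneg, ← Real.log_prod (fun j _ => by exact_mod_cast (hpos j).ne')]
  apply Real.log_le_log
  · exact Finset.prod_pos fun j _ => by exact_mod_cast hpos j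
  · exact_mod_cast prod_choose_le_choose_sum Finset.univ (fun j => m₁ j + m₂ j) m₁
end
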